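/- There exists an absolute constant c > 0 such that for every d ≥ 1, every α ∈ [1/2, 1], every n ∈ ℕ and every f : {0,1}^n → {0,1}, E_x[s_f(x)^α] ≥ c·d^α·W_{≥d}[f]. -/

import Mathlib

open Finset

noncomputable section

/-- Expectation over the uniform distribution on `{0,1}^n`. -/
def hcExp (n : ℕ) (g : (Fin n → Bool) → ℝ) : ℝ :=
  (∑ x : Fin n → Bool, g x) / 2 ^ n

/-- Flip the `i`-th coordinate of `x`. -/
def hcFlip {n : ℕ} (x : Fin n → Bool) (i : Fin n) : Fin n → Bool :=
  Function.update x i (!(x i))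

/-- Sensitivity of `f` at `x`. -/
def sens {n : ℕ} (f : (Fin n → Bool) → Bool) (x : Fin n → Bool) : ℕ :=
  (Finset.univ.filter fun i => f (hcFlip x i) ≠ f x).card

/-- `f` with values in `{0,1} ⊆ ℝ`. -/
def toReal {n : ℕ} (f : (Fin n → Bool) → Bool) : (Fin n → Bool) → ℝ :=
  fun x => if f x then 1 else 0

/-- Variance of a Boolean function. -/
def hcVar (n : ℕ) (f : (Fin n → Bool) → Bool) : ℝ :=
  hcExp n (toReal f) - (hcExp n (toReal f)) ^ 2

/-- Influence of coordinate `i`. -/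
def influence (n : ℕ) (f : (Fin n → Bool) → Bool) (i : Fin n) : ℝ :=
  hcExp n (fun x => if f (hcFlip x i) = f x then 0 else 1)

/-- Fourier character. -/
def chi {n : ℕ} (S : Finset (Fin n)) (x : Fin n → Bool) : ℝ :=
  ∏ i ∈ S, (if x i then (-1 : ℝ) else 1)

/-- Fourier coefficient of `g` at `S`. -/
def fcoef (n : ℕ) (g : (Fin n → Bool) → ℝ) (S : Finset (Fin n)) : ℝ :=
  hcExp n (fun x => g x * chi S x)

/-- Derivative of `g` along coordinate `i`. -/
def derivOn {n : ℕ} (g : (Fin n → Bool) → ℝ) (i : Fin n) (x : Fin n → Bool) : ℝ :=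
  g (Function.update x i false) - g (Function.update x i true)

/-- Euclidean norm of the gradient of `g` at `x`. -/
def gradNorm2 {n : ℕ} (g : (Fin n → Bool) → ℝ) (x : Fin n → Bool) : ℝ :=
  Real.sqrt (∑ i, (derivOn g i x) ^ 2)

/-- `ℓ_p` norm of the gradient of `g` at `x`. -/
def gradNormP {n : ℕ} (p : ℝ) (g : (Fin n → Bool) → ℝ) (x : Fin n → Bool) : ℝ :=
  (∑ i, |derivOn g i x| ^ p) ^ (1 / p)

/-- Fourier weight at exactly level `d`. -/
def wEq (n : ℕ) (g : (Fin n → Bool) → ℝ) (d : ℕ) : ℝ :=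
  ∑ S ∈ Finset.univ.filter (fun S : Finset (Fin n) => S.card = d), (fcoef n g S) ^ 2

/-- Approximate level-`d` Fourier weight: levels in `[d, 2d)`. -/
def wApprox (n : ℕ) (g : (Fin n → Bool) → ℝ) (d : ℕ) : ℝ :=
  ∑ S ∈ Finset.univ.filter (fun S : Finset (Fin n) => d ≤ S.card ∧ S.card < 2 * d),
    (fcoef n g S) ^ 2

/-- Fourier weight at levels `≥ d`. -/
def wGe (n : ℕ) (g : (Fin n → Bool) → ℝ) (d : ℕ) : ℝ :=
  ∑ S ∈ Finset.univ.filter (fun S : Finset (Fin n) => d ≤ S.card), (fcoef n g S) ^ 2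


def sg (b : Bool) : ℝ := if b then -1 else 1

lemma sg_sq (b : Bool) : sg b * sg b = 1 := by cases b <;> simp [sg]

lemma sum_prod_bool {n : ℕ} (g : Fin n → Bool → ℝ) :
    ∑ x : Fin n → Bool, ∏ i, g i (x i) = ∏ i, (g i true + g i false) := by
  have := Finset.prod_univ_sum (fun _ : Fin n => (Finset.univ : Finset Bool)) g
  simp only [Fintype.univ_bool, Fintype.piFinset_univ] at this
  rw [← Fintype.univ_bool, Fintype.piFinset_univ] at this
  rw [← this]
  refine Finset.prod_congr rfl fun i _ => ?_
  simp

def ker {n : ℕ} (r : ℝ) (x y : Fin n → Bool) : ℝ := ∏ i, (1 + r * (sg (x i) * sg (y i)))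

def kap {n : ℕ} (r : ℝ) (x y : Fin n → Bool) (i : Fin n) : ℝ :=
  (∏ j ∈ Finset.univ.erase i, (1 + r * (sg (x j) * sg (y j)))) * (sg (x i) * sg (y i))

def phi (n : ℕ) (F : (Fin n → Bool) → ℝ) (r : ℝ) : ℝ :=
  (∑ x, ∑ y, F x * F y * ker r x y) / 4 ^ n

lemma chi_eq {n : ℕ} (S : Finset (Fin n)) (x : Fin n → Bool) : chi S x = ∏ i ∈ S, sg (x i) := rfl

lemma ker_eq {n : ℕ} (r : ℝ) (x y : Fin n → Bool) :
    ker r x y = ∑ S : Finset (Fin n), r ^ S.card * (chi S x * chi S y) := by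
  unfold ker
  rw [Finset.prod_one_add, Finset.powerset_univ]
  refine Finset.sum_congr rfl fun S _ => ?_
  rw [Finset.prod_mul_distrib, Finset.prod_mul_distrib, Finset.prod_const, chi_eq, chi_eq]

lemma phi_eq (n : ℕ) (F : (Fin n → Bool) → ℝ) (r : ℝ) :
    ∑ S : Finset (Fin n), r ^ S.card * fcoef n F S ^ 2 = phi n F r := by
  unfold phi fcoef hcExp
  simp_rw [ker_eq, Finset.mul_sum]
  rw [eq_div_iff (by positivity), Finset.sum_mul]
  rw [Finset.sum_congr rfl (fun x _ => Finset.sum_comm), Finset.sum_comm]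
  refine Finset.sum_congr rfl fun S _ => ?_
  have h4 : (4 : ℝ) ^ n = 2 ^ n * 2 ^ n := by rw [← mul_pow]; norm_num
  rw [h4, div_pow, pow_two, pow_two]
  field_simp
  rw [pow_two, Finset.sum_mul_sum, Finset.mul_sum]
  refine Finset.sum_congr rfl fun x _ => ?_
  rw [Finset.mul_sum]
  refine Finset.sum_congr rfl fun y _ => ?_
  ring

lemma ker_hasDerivAt {n : ℕ} (r : ℝ) (x y : Fin n → Bool) :
    HasDerivAt (fun r => ker r x y) (∑ i, kap r x y i) r := by
  unfold ker kap
  have := HasDerivAt.fun_finsetProd (u := (Finset.univ : Finset (Fin n)))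
    (f := fun i r => 1 + r * (sg (x i) * sg (y i))) (f' := fun i => sg (x i) * sg (y i)) (x := r)
    (fun i _ => by
      simpa using ((hasDerivAt_id r).mul_const (sg (x i) * sg (y i))).const_add 1)
  simpa using this

lemma phi_hasDerivAt (n : ℕ) (F : (Fin n → Bool) → ℝ) (r : ℝ) :
    HasDerivAt (phi n F) ((∑ x, ∑ y, F x * F y * ∑ i, kap r x y i) / 4 ^ n) r := by
  unfold phi
  refine HasDerivAt.div_const ?_ _
  refine HasDerivAt.fun_sum fun x _ => HasDerivAt.fun_sum fun y _ => ?_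
  exact (ker_hasDerivAt r x y).const_mul _

lemma hcFlip_hcFlip {n : ℕ} (x : Fin n → Bool) (i : Fin n) : hcFlip (hcFlip x i) i = x := by
  unfold hcFlip; simp

lemma kap_flip {n : ℕ} (r : ℝ) (x y : Fin n → Bool) (i : Fin n) :
    kap r x (hcFlip y i) i = - kap r x y i := by
  unfold kap
  have h1 : ∏ j ∈ Finset.univ.erase i, (1 + r * (sg (x j) * sg (hcFlip y i j))) =
      ∏ j ∈ Finset.univ.erase i, (1 + r * (sg (x j) * sg (y j))) := by
    refine Finset.prod_congr rfl fun j hj => ?_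
    rw [hcFlip, Function.update_of_ne (Finset.ne_of_mem_erase hj)]
  have h2 : sg (hcFlip y i i) = - sg (y i) := by
    unfold hcFlip; cases h : y i <;> simp [sg]
  rw [h1, h2]; ring

lemma sum_flip {n : ℕ} (i : Fin n) (g : (Fin n → Bool) → ℝ) :
    ∑ y, g (hcFlip y i) = ∑ y, g y :=
  Equiv.sum_comp (Function.Involutive.toPerm (fun y => hcFlip y i) (fun y => hcFlip_hcFlip y i)) g

lemma symm_sum {n : ℕ} (F : (Fin n → Bool) → ℝ) (r : ℝ) (x : Fin n → Bool) (i : Fin n) :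
    ∑ y, F y * kap r x y i = ∑ y, (F y - F (hcFlip y i)) / 2 * kap r x y i := by
  have h := sum_flip i (fun y => F y * kap r x y i)
  simp only [kap_flip] at h
  have : ∑ y, (F y - F (hcFlip y i)) / 2 * kap r x y i =
      (∑ y, F y * kap r x y i + ∑ y, F (hcFlip y i) * -kap r x y i) / 2 := by
    rw [← Finset.sum_add_distrib, Finset.sum_div]
    exact Finset.sum_congr rfl fun y _ => by ring
  rw [this, h]; ring

lemma one_add_pos {r : ℝ} (h0 : 0 ≤ r) (h1 : r < 1) (a b : Bool) : 0 < 1 + r * (sg a * sg b) := by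
  cases a <;> cases b <;> simp [sg] <;> linarith

lemma ker_pos {n : ℕ} {r : ℝ} (h0 : 0 ≤ r) (h1 : r < 1) (x y : Fin n → Bool) : 0 < ker r x y :=
  Finset.prod_pos fun i _ => one_add_pos h0 h1 _ _

lemma ker_sum {n : ℕ} (r : ℝ) (y : Fin n → Bool) : ∑ x, ker r x y = 2 ^ n := by
  unfold ker
  rw [sum_prod_bool (fun i b => 1 + r * (sg b * sg (y i)))]
  rw [Finset.prod_congr rfl (g := fun _ => (2:ℝ))]
  · simp
  · intro i _; cases y i <;> simp [sg] <;> ring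

lemma kap_abs_sum {n : ℕ} {r : ℝ} (h0 : 0 ≤ r) (h1 : r < 1) (y : Fin n → Bool) (i : Fin n) :
    ∑ x, |kap r x y i| = 2 ^ n := by
  have h : ∀ x, |kap r x y i| = ∏ j, (if j = i then 1 else 1 + r * (sg (x j) * sg (y j))) := by
    intro x
    unfold kap
    rw [← Finset.mul_prod_erase _ _ (Finset.mem_univ i), abs_mul]
    have : |sg (x i) * sg (y i)| = 1 := by cases x i <;> cases y i <;> simp [sg]
    rw [this, mul_one, if_pos rfl, one_mul, abs_of_pos
      (Finset.prod_pos fun i _ => one_add_pos h0 h1 _ _)]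
    refine Finset.prod_congr rfl fun j hj => ?_
    rw [if_neg (Finset.ne_of_mem_erase hj)]
  simp_rw [h]
  rw [sum_prod_bool (fun j b => if j = i then 1 else 1 + r * (sg b * sg (y j)))]
  rw [Finset.prod_congr rfl (g := fun _ => (2:ℝ))]
  · simp
  · intro j _
    split_ifs
    · norm_num
    · cases y j <;> simp [sg] <;> ring

def psi (r : ℝ) (a b : Bool) : ℝ := (sg a * sg b) / (1 + r * (sg a * sg b))

lemma kap_eq {n : ℕ} {r : ℝ} (h0 : 0 ≤ r) (h1 : r < 1) (x y : Fin n → Bool) (i : Fin n) :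
    kap r x y i = ker r x y * psi r (x i) (y i) := by
  unfold kap ker psi
  rw [← Finset.mul_prod_erase _ _ (Finset.mem_univ i)]
  have := (one_add_pos h0 h1 (x i) (y i)).ne'
  generalize (∏ j ∈ Finset.univ.erase i, (1 + r * (sg (x j) * sg (y j)))) = P
  generalize sg (x i) * sg (y i) = t at *
  have e : (1 + r * t) * (t / (1 + r * t)) = t := by rw [mul_comm]; exact div_mul_cancel₀ t this
  calc P * t = P * ((1 + r * t) * (t / (1 + r * t))) := by rw [e]
    _ = _ := by ring

lemma kap_corr {n : ℕ} {r : ℝ} (h0 : 0 ≤ r) (h1 : r < 1) (y : Fin n → Bool) (i j : Fin n) :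
    ∑ x, kap r x y i * kap r x y j / ker r x y = if i = j then 2 ^ n / (1 - r ^ 2) else 0 := by
  have h : ∀ x, kap r x y i * kap r x y j / ker r x y =
      ∏ k, ((1 + r * (sg (x k) * sg (y k))) *
        ((if k = i then psi r (x k) (y k) else 1) * (if k = j then psi r (x k) (y k) else 1))) := by
    intro x
    rw [kap_eq h0 h1, kap_eq h0 h1, Finset.prod_mul_distrib, Finset.prod_mul_distrib,
      Finset.prod_ite_eq', Finset.prod_ite_eq']
    have := (ker_pos h0 h1 x y).ne'
    simp only [Finset.mem_univ, if_true]
    change _ = ker r x y * _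
    field_simp
  simp_rw [h]
  rw [sum_prod_bool (fun k b => (1 + r * (sg b * sg (y k))) *
        ((if k = i then psi r b (y k) else 1) * (if k = j then psi r b (y k) else 1)))]
  have hp : (1 + r) ≠ 0 := by linarith
  have hm : (1 - r) ≠ 0 := by linarith
  have hq : (1 - r^2) ≠ 0 := by
    have : (1 - r^2) = (1-r)*(1+r) := by ring
    rw [this]; exact mul_ne_zero hm hp
  have hm' : (1 + -r) ≠ 0 := by linarith
  split_ifs with hij
  · subst hij
    rw [Finset.prod_congr rfl (g := fun k => 2 * (if k = i then 1 / (1 - r^2) else 1))]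
    · rw [Finset.prod_mul_distrib, Finset.prod_ite_eq']
      simp [div_eq_mul_inv]
    · intro k _
      split_ifs
      · cases y k <;> simp [sg, psi] <;> field_simp <;> ring
      · cases y k <;> simp [sg] <;> ring
  · refine Finset.prod_eq_zero (Finset.mem_univ i) ?_
    simp only [if_true, if_neg hij]
    cases y i <;> simp [sg, psi] <;> field_simp <;> ring

lemma bound1 {n : ℕ} {r : ℝ} (h0 : 0 ≤ r) (h1 : r < 1) (F : (Fin n → Bool) → ℝ)
    (hF : ∀ x, |F x| ≤ 1) (y : Fin n → Bool) (A : Finset (Fin n)) :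
    |∑ x, F x * ∑ i ∈ A, kap r x y i| ≤ 2 ^ n * A.card := by
  calc |∑ x, F x * ∑ i ∈ A, kap r x y i| ≤ ∑ x, |F x * ∑ i ∈ A, kap r x y i| :=
        Finset.abs_sum_le_sum_abs _ _
    _ ≤ ∑ x, ∑ i ∈ A, |kap r x y i| := by
        refine Finset.sum_le_sum fun x _ => ?_
        rw [abs_mul]
        calc _ ≤ 1 * |∑ i ∈ A, kap r x y i| := by gcongr; exact hF x
          _ ≤ _ := by rw [one_mul]; exact Finset.abs_sum_le_sum_abs _ _
    _ = 2 ^ n * A.card := by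
        rw [Finset.sum_comm]
        simp_rw [kap_abs_sum h0 h1]
        simp [mul_comm]

lemma bound2 {n : ℕ} {r : ℝ} (h0 : 0 ≤ r) (h1 : r < 1) (F : (Fin n → Bool) → ℝ)
    (hF : ∀ x, |F x| ≤ 1) (y : Fin n → Bool) (A : Finset (Fin n)) :
    |∑ x, F x * ∑ i ∈ A, kap r x y i| ≤ 2 ^ n * (√A.card / √(1 - r)) := by
  have hr : 0 < 1 - r := by linarith
  have hK := fun x => ker_pos h0 h1 x y
  have cs := Finset.sum_sq_le_sum_mul_sum_of_sq_eq_mul (Finset.univ : Finset (Fin n → Bool))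
    (r := fun x => F x * ∑ i ∈ A, kap r x y i) (f := fun x => F x ^ 2 * ker r x y)
    (g := fun x => (∑ i ∈ A, kap r x y i) ^ 2 / ker r x y)
    (fun x _ => mul_nonneg (sq_nonneg _) (hK x).le)
    (fun x _ => div_nonneg (sq_nonneg _) (hK x).le)
    (fun x _ => by have := (hK x).ne'; field_simp)
  have e1 : ∑ x, F x ^ 2 * ker r x y ≤ 2 ^ n := by
    rw [← ker_sum r y]
    refine Finset.sum_le_sum fun x _ => ?_
    have : F x ^ 2 ≤ 1 := by rw [sq_le_one_iff_abs_le_one]; exact hF x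
    nlinarith [hK x]
  have e2 : ∑ x, (∑ i ∈ A, kap r x y i) ^ 2 / ker r x y = A.card * (2 ^ n / (1 - r ^ 2)) := by
    have : ∀ x, (∑ i ∈ A, kap r x y i) ^ 2 / ker r x y =
        ∑ i ∈ A, ∑ j ∈ A, kap r x y i * kap r x y j / ker r x y := by
      intro x
      rw [pow_two, Finset.sum_mul_sum, Finset.sum_div]
      simp_rw [Finset.sum_div]
    simp_rw [this]
    rw [Finset.sum_comm]
    rw [Finset.sum_congr rfl (fun i _ => Finset.sum_comm)]
    simp_rw [kap_corr h0 h1]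
    simp
  have e3 : (2:ℝ) ^ n / (1 - r ^ 2) ≤ 2 ^ n / (1 - r) := by
    gcongr; nlinarith
  refine abs_le_of_sq_le_sq ?_ (by positivity)
  rw [mul_pow, div_pow, Real.sq_sqrt (by positivity), Real.sq_sqrt hr.le]
  refine cs.trans ?_
  rw [e2]
  calc _ ≤ 2 ^ n * ((A.card : ℝ) * (2 ^ n / (1 - r))) := by
        have : 0 ≤ 1 - r ^ 2 := by nlinarith
        gcongr
    _ = _ := by ring

lemma deriv_bound {n : ℕ} (f : (Fin n → Bool) → Bool) {r : ℝ} (h0 : 0 ≤ r) (h1 : r < 1) (d : ℕ) :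
    (∑ x, ∑ y, toReal f x * toReal f y * ∑ i, kap r x y i) / 4 ^ n ≤
      hcExp n (fun y => (if sens f y ≤ d then (sens f y : ℝ) else √(sens f y) / √(1 - r)) / 2) := by
  set F := toReal f with hFdef
  have hF : ∀ x, |F x| ≤ 1 := by
    intro x; simp only [hFdef, toReal]; split_ifs <;> simp
  have key : ∑ x, ∑ y, F x * F y * ∑ i, kap r x y i =
      ∑ y, ∑ x, F x * ∑ i, (F y - F (hcFlip y i)) / 2 * kap r x y i := by
    rw [Finset.sum_comm (f := fun y x => F x * ∑ i, (F y - F (hcFlip y i)) / 2 * kap r x y i)]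
    refine Finset.sum_congr rfl fun x _ => ?_
    simp_rw [mul_assoc, ← Finset.mul_sum]
    congr 1
    simp_rw [Finset.mul_sum]
    rw [Finset.sum_comm, Finset.sum_congr rfl (fun i _ => symm_sum F r x i), Finset.sum_comm]
  rw [key]
  unfold hcExp
  have h4 : (4 : ℝ) ^ n = 2 ^ n * 2 ^ n := by rw [← mul_pow]; norm_num
  rw [h4, ← div_div]
  refine div_le_div_of_nonneg_right ?_ (by positivity)
  rw [Finset.sum_div]
  refine Finset.sum_le_sum fun y _ => ?_
  rw [div_le_iff₀ (by positivity)]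
  set A := Finset.univ.filter fun i => f (hcFlip y i) ≠ f y with hA
  obtain ⟨ε, hε, hL⟩ : ∃ ε : ℝ, |ε| = 1 ∧ ∀ i, (F y - F (hcFlip y i)) / 2 = 
      ε / 2 * if i ∈ A then 1 else 0 := by
    refine ⟨if f y then 1 else -1, by split_ifs <;> simp, fun i => ?_⟩
    simp only [hA, hFdef, toReal, Finset.mem_filter, Finset.mem_univ, true_and]
    cases f y <;> cases f (hcFlip y i) <;> simp <;> norm_num
  have e : ∑ x, F x * ∑ i, (F y - F (hcFlip y i)) / 2 * kap r x y i =
      ε / 2 * ∑ x, F x * ∑ i ∈ A, kap r x y i := by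
    rw [Finset.mul_sum]
    refine Finset.sum_congr rfl fun x _ => ?_
    simp_rw [hL]
    rw [← Finset.sum_filter_add_sum_filter_not _ (· ∈ A)]
    simp only [Finset.mul_sum, Finset.sum_filter, ← Finset.sum_add_distrib]
    rw [← Finset.sum_subset (Finset.subset_univ A)]
    · refine Finset.sum_congr rfl fun i hi => ?_
      simp [hi]; ring
    · intro i _ hi; simp [hi]
  have e' : ε / 2 * ∑ x, F x * ∑ i ∈ A, kap r x y i ≤ |∑ x, F x * ∑ i ∈ A, kap r x y i| / 2 := by
    refine (le_abs_self _).trans ?_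
    rw [abs_mul, abs_div, hε, abs_two]; linarith
  have hs : sens f y = A.card := rfl
  rw [e, hs]
  refine e'.trans ?_
  split_ifs
  · linarith [bound1 h0 h1 F hF y A]
  · linarith [bound2 h0 h1 F hF y A]

lemma hcExp_mono {n : ℕ} {g h : (Fin n → Bool) → ℝ} (H : ∀ x, g x ≤ h x) : hcExp n g ≤ hcExp n h :=
  div_le_div_of_nonneg_right (Finset.sum_le_sum fun x _ => H x) (by positivity)

lemma phi_diff {n : ℕ} (f : (Fin n → Bool) → Bool) (d : ℕ) (hd : 1 ≤ d) :
    phi n (toReal f) 1 - phi n (toReal f) (1 - 1 / d) ≤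
      hcExp n (fun y => if sens f y ≤ d then (sens f y : ℝ) / d else √(sens f y) / √d) := by
  have hd' : (1:ℝ) ≤ d := by exact_mod_cast hd
  set A := hcExp n (fun y => if sens f y ≤ d then (sens f y : ℝ) else 0) with hA
  set B := hcExp n (fun y => if sens f y ≤ d then 0 else √(sens f y)) with hB
  have A0 : 0 ≤ A := div_nonneg (Finset.sum_nonneg fun x _ => by split_ifs <;> positivity)
    (by positivity)
  have split : ∀ u v : ℝ, hcExp n (fun y => if sens f y ≤ d then (sens f y : ℝ) * u 
      else √(sens f y) * v) = A * u + B * v := by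
    intro u v
    simp only [hA, hB, hcExp]
    rw [div_mul_eq_mul_div, div_mul_eq_mul_div, ← add_div, Finset.sum_mul, Finset.sum_mul,
      ← Finset.sum_add_distrib]
    congr 1
    refine Finset.sum_congr rfl fun x _ => ?_
    split_ifs <;> simp
  have hr0 : 0 ≤ 1 - 1 / (d:ℝ) := by
    rw [sub_nonneg, div_le_one (by linarith)]; exact hd'
  have hr1 : 1 - 1 / (d:ℝ) ≤ 1 := by
    have : 0 ≤ 1 / (d:ℝ) := by positivity
    linarith
  have anti : AntitoneOn (fun r => phi n (toReal f) r - (A / 2 * r - B * √(1 - r)))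
      (Set.Icc (1 - 1 / (d:ℝ)) 1) := by
    have hder : ∀ r ∈ interior (Set.Icc (1 - 1 / (d:ℝ)) 1), HasDerivAt
      (fun r => phi n (toReal f) r - (A / 2 * r - B * √(1 - r)))
      ((∑ x, ∑ y, toReal f x * toReal f y * ∑ i, kap r x y i) / 4 ^ n - 
        (A / 2 * 1 - B * (-1 / (2 * √(1 - r))))) r := by
      intro r hr
      rw [interior_Icc] at hr
      have : 1 - r ≠ 0 := by linarith [hr.2]
      exact (phi_hasDerivAt n _ r).sub (((hasDerivAt_id r).const_mul _).sub
        ((((hasDerivAt_id r).const_sub 1).sqrt this).const_mul B))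
    refine antitoneOn_of_deriv_nonpos (convex_Icc _ _) ?_ ?_ ?_
    · refine ContinuousOn.sub ?_ (by fun_prop)
      exact fun r _ => (phi_hasDerivAt n _ r).continuousAt.continuousWithinAt
    · exact fun r hr => (hder r hr).differentiableAt.differentiableWithinAt
    · intro r hr
      rw [(hder r hr).deriv]
      rw [interior_Icc] at hr
      have h := deriv_bound f (hr0.trans hr.1.le) hr.2 d
      have h2 := split (1/2) (1 / √(1 - r) / 2)
      have h3 : (fun y => (if sens f y ≤ d then (sens f y : ℝ) else √(sens f y) / √(1 - r)) / 2) =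
        (fun y => if sens f y ≤ d then (sens f y : ℝ) * (1/2)
          else √(sens f y) * (1 / √(1 - r) / 2)) := by
        funext y; split_ifs <;> ring
      rw [h3, h2] at h
      have h4 : -1 / (2 * √(1 - r)) = - (1 / √(1 - r) / 2) := by ring
      rw [h4]; linarith
  have h := anti ⟨le_rfl, hr1⟩ ⟨hr1, le_rfl⟩ hr1
  have h2 := split (1 / d) (1 / √d)
  have h3 : (fun y => if sens f y ≤ d then (sens f y : ℝ) / d else √(sens f y) / √d) = 
      (fun y => if sens f y ≤ d then (sens f y : ℝ) * (1 / d) else √(sens f y) * (1 / √d)) := by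
    funext y; split_ifs <;> ring
  rw [h3, h2]
  simp only [sub_self, Real.sqrt_zero, sub_sub_cancel] at h
  have h5 : √(1 / (d:ℝ)) = 1 / √d := by rw [Real.sqrt_div zero_le_one, Real.sqrt_one]
  rw [h5] at h
  have : 0 ≤ A * (1 / (d:ℝ)) := by positivity
  linarith

lemma phi_lower {n : ℕ} (F : (Fin n → Bool) → ℝ) (d : ℕ) (hd : 1 ≤ d) :
    1 / 2 * wGe n F d ≤ phi n F 1 - phi n F (1 - 1 / d) := by
  have hd' : (1:ℝ) ≤ d := by exact_mod_cast hd
  have hr0 : 0 ≤ 1 - 1 / (d:ℝ) := by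
    rw [sub_nonneg, div_le_one (by linarith)]; exact hd'
  have hr1 : 1 - 1 / (d:ℝ) ≤ 1 := by
    have : 0 ≤ 1 / (d:ℝ) := by positivity
    linarith
  rw [← phi_eq, ← phi_eq, ← Finset.sum_sub_distrib, wGe, Finset.mul_sum, Finset.sum_filter]
  refine Finset.sum_le_sum fun S _ => ?_
  have hq := sq_nonneg (fcoef n F S)
  rw [one_pow]
  split_ifs with h
  · have a := pow_le_pow_of_le_one hr0 hr1 h
    have b := Real.one_sub_div_pow_le_exp_neg (n := d) (t := 1) hd'
    have c : Real.exp (-1) < 1 / 2 := by linarith [Real.exp_neg_one_lt_d9]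
    nlinarith
  · have := pow_le_one₀ (n := S.card) hr0 hr1
    nlinarith

theorem sensitivity_moment_lower_bound_level_ge_d :
    ∃ c : ℝ, 0 < c ∧ ∀ (d : ℕ), 1 ≤ d → ∀ (α : ℝ), 1 / 2 ≤ α → α ≤ 1 →
      ∀ (n : ℕ) (f : (Fin n → Bool) → Bool),
        hcExp n (fun x => (sens f x : ℝ) ^ α) ≥
          c * (d : ℝ) ^ α * wGe n (toReal f) d := by
  refine ⟨1 / 2, by norm_num, fun d hd α ha1 ha2 n f => ?_⟩
  have hd' : (1:ℝ) ≤ d := by exact_mod_cast hd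
  have hd0 : (0:ℝ) < d := by linarith
  have hdp : 0 < (d:ℝ) ^ α := Real.rpow_pos_of_pos hd0 α
  have h1 := (phi_lower (toReal f) d hd).trans (phi_diff f d hd)
  have h2 : hcExp n (fun y => if sens f y ≤ d then (sens f y : ℝ) / d else √(sens f y) / √d) ≤
      hcExp n (fun x => (sens f x : ℝ) ^ α / (d:ℝ) ^ α) := by
    refine hcExp_mono fun x => ?_
    rw [← Real.div_rpow (by positivity) (by positivity)]
    split_ifs with h
    · rcases Nat.eq_zero_or_pos (sens f x) with h0 | h0
      · rw [h0]; simp; rw [Real.zero_rpow (by linarith)]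
      · have : (0:ℝ) < sens f x := by exact_mod_cast h0
        have hle : (sens f x : ℝ) ≤ d := by exact_mod_cast h
        conv_lhs => rw [← Real.rpow_one ((sens f x : ℝ) / d)]
        exact Real.rpow_le_rpow_of_exponent_ge (by positivity) ((div_le_one hd0).2 hle) ha2
    · have hle : (d:ℝ) ≤ sens f x := by exact_mod_cast (not_le.1 h).le
      rw [← Real.sqrt_div (by positivity), Real.sqrt_eq_rpow]
      exact Real.rpow_le_rpow_of_exponent_le ((one_le_div hd0).2 hle) ha1
  have h3 : hcExp n (fun x => (sens f x : ℝ) ^ α / (d:ℝ) ^ α) =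
      hcExp n (fun x => (sens f x : ℝ) ^ α) / (d:ℝ) ^ α := by
    unfold hcExp
    rw [← Finset.sum_div, div_right_comm]
  have h4 := h1.trans h2
  rw [h3, le_div_iff₀ hdp] at h4
  linarith

end
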